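/- Let p be an odd prime, ω = e^{2πi/p}, Q the set of nonzero quadratic residues mod p and N the set of quadratic non-residues mod p. Then Σ_{x∈Q} ω^x − Σ_{x∈N} ω^x equals √p if p ≡ 1 (mod 4) and i√p if p ≡ 3 (mod 4). -/

import Mathlib

/-!
Let `p = 2 * m + 1` be prime and let `ζ` be a primitive `p`-th root of unity. Following Kronecker,
compare the Gauss sum `F(ζ) = ∑ (x/p) ζ ^ x` with `P(ζ) = ∏ (ζ ^ j - ζ ^ (-j))`, where `j` runs over
the odd numbers below `p`. Both have square `(-1) ^ m * p`, so they agree up to sign. If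
`F(ζ) = -P(ζ)`, then the `p`-th cyclotomic polynomial divides `F + P`; modulo `p` it is
`(X - 1) ^ (p - 1)`, so the `m`-th derivative of `F + P` at `1` vanishes modulo `p`. But the `m`-th
derivatives of `F` and `P` at `1` are both `-1` modulo `p`: the first by Euler's criterion, the
second by Wilson's theorem. Hence `F(ζ) = P(ζ)`, and at `ζ = exp (2πi / p)` the product is
`i ^ m * ∏ 2 sin (2πj / p)`, whose sign is found by counting the negative sines.
-/

section QuadraticGaussSum

open Finset Polynomial

lemma isSquare_units_val_iff {M : Type*} [CommMonoid M] {u : Mˣ} :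
    IsSquare (u : M) ↔ IsSquare u := by
  refine ⟨fun ⟨v, hv⟩ ↦ ?_, fun h ↦ h.map (Units.coeHom M)⟩
  obtain ⟨w, rfl⟩ : IsUnit v := isUnit_of_mul_isUnit_left (hv ▸ u.isUnit)
  exact ⟨w, Units.ext hv⟩

lemma prod_range_two_mul {M : Type*} [CommMonoid M] (f : ℕ → M) (m : ℕ) :
    ∏ i ∈ range (2 * m), f i =
      (∏ k ∈ range m, f (2 * k)) * ∏ k ∈ range m, f (2 * k + 1) := by
  induction m with
  | zero => simp
  | succ n ih =>
    rw [Nat.mul_succ, prod_range_succ, prod_range_succ, ih, prod_range_succ, prod_range_succ,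
      mul_assoc, mul_mul_mul_comm]

lemma prod_range_four_mul_add_two_mul_factorial (m : ℕ) :
    (∏ k ∈ range m, (4 * k + 2)) * m.factorial = (2 * m).factorial := by
  induction m with
  | zero => simp
  | succ n ih =>
    rw [prod_range_succ, show 2 * (n + 1) = 2 * n + 1 + 1 by ring, Nat.factorial_succ (2 * n + 1),
      Nat.factorial_succ (2 * n), Nat.factorial_succ n, ← ih]
    ring

lemma sum_eval_eq_neg_coeff_card_sub_one {K : Type*} [Field K] [Fintype K] {f : K[X]}
    (hf : f.natDegree < Fintype.card K) :
    ∑ x, f.eval x = -f.coeff (Fintype.card K - 1) := by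
  classical
  have sum_pow_card_sub_one : ∑ x : K, x ^ (Fintype.card K - 1) = -1 := by
    have hcard : Fintype.card K - 1 ≠ 0 := Nat.sub_ne_zero_of_lt Fintype.one_lt_card
    have hpow (x : K) : x ^ (Fintype.card K - 1) = 1 - if x = 0 then 1 else 0 := by
      split_ifs with hx
      · simp [hx, hcard]
      · simp [FiniteField.pow_card_sub_one_eq_one x hx]
    simp [hpow]
  calc ∑ x, f.eval x
    _ = ∑ i ∈ range (Fintype.card K), f.coeff i * ∑ x : K, x ^ i := by
      simp_rw [eval_eq_sum_range' hf, mul_sum]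
      exact sum_comm
    _ = f.coeff (Fintype.card K - 1) * ∑ x : K, x ^ (Fintype.card K - 1) := by
      refine sum_eq_single _ (fun i hi hne ↦ ?_) fun h ↦ ?_
      · rw [FiniteField.sum_pow_lt_card_sub_one _ _ (by grind), mul_zero]
      · exact absurd (mem_range.2 (Nat.sub_one_lt Fintype.card_ne_zero)) h
    _ = -f.coeff (Fintype.card K - 1) := by rw [sum_pow_card_sub_one, mul_neg_one]

lemma aeval_iterate_derivative_prod_of_aeval_eq_zero {ι R A : Type*} [CommRing R] [CommRing A]
    [Algebra R A] {s : Finset ι} {f : ι → R[X]} {a : A} (hf : ∀ i ∈ s, aeval a (f i) = 0) :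
    aeval a (derivative^[#s] (∏ i ∈ s, f i)) =
      (#s).factorial * ∏ i ∈ s, aeval a (derivative (f i)) := by
  let g (i : ι) : A[X] := (f i).map (algebraMap R A) /ₘ (X - C a)
  have factor (i) (hi : i ∈ s) : (f i).map (algebraMap R A) = (X - C a) * g i := by
    refine (mul_divByMonic_eq_iff_isRoot.2 ?_).symm
    rw [IsRoot, eval_map_algebraMap, hf i hi]
  have eval_quotient (i) (hi : i ∈ s) : (g i).eval a = aeval a (derivative (f i)) := by
    rw [← eval_map_algebraMap, ← derivative_map, factor i hi]
    simp [derivative_mul]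
  have hprod : (∏ i ∈ s, f i).map (algebraMap R A) = (X - C a) ^ #s * ∏ i ∈ s, g i := by
    rw [Polynomial.map_prod, prod_congr rfl factor, prod_mul_distrib, prod_const]
  rw [aeval_iterate_derivative_self _ _ _ hprod, eval_prod, prod_congr rfl eval_quotient,
    nsmul_eq_mul]

lemma aeval_one_iterate_derivative_eq_zero_of_isPrimitiveRoot {K : Type*} [Field K] [CharZero K]
    {p : ℕ} [Fact p.Prime] {ζ : K} (hζ : IsPrimitiveRoot ζ p) {f : ℤ[X]} (hf : aeval ζ f = 0)
    {k : ℕ} (hk : k < p - 1) :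
    aeval (1 : ZMod p) (derivative^[k] f) = 0 := by
  have hp : p.Prime := Fact.out
  have cyclotomic_dvd : cyclotomic p ℤ ∣ f := by
    rw [cyclotomic_eq_minpoly hζ hp.pos]
    exact minpoly.isIntegrallyClosed_dvd (hζ.isIntegral hp.pos) hf
  have cyclotomic_zmod : cyclotomic p (ZMod p) = (X - C 1) ^ (p - 1) := by
    simpa using cyclotomic_mul_prime_eq_pow_of_not_dvd (ZMod p) hp.not_dvd_one
  obtain ⟨g, rfl⟩ := cyclotomic_dvd
  refine aeval_iterate_derivative_of_lt _ (p - 1) 1 (p' := g.map (algebraMap ℤ (ZMod p))) ?_ hk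
  rw [Polynomial.map_mul, map_cyclotomic, cyclotomic_zmod]

section FeketePolynomial

/-- The Fekete polynomial `∑ (x/p) X ^ x`, with `x` running over `0, …, p - 1`. Its value at a
`p`-th root of unity is a quadratic Gauss sum. -/
noncomputable def feketePolynomial (p : ℕ) [Fact p.Prime] : ℤ[X] :=
  ∑ x : ZMod p, C (quadraticChar (ZMod p) x) * X ^ x.val

variable {p m : ℕ} [Fact p.Prime]

lemma aeval_feketePolynomial {R : Type*} [CommRing R] (ζ : R) :
    aeval ζ (feketePolynomial p) = ∑ x : ZMod p, (quadraticChar (ZMod p) x : R) * ζ ^ x.val := by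
  simp [feketePolynomial]

lemma aeval_feketePolynomial_eq_sum_isSquare_sub_sum_not_isSquare {R : Type*} [CommRing R]
    (ζ : R) :
    aeval ζ (feketePolynomial p) =
      ∑ u : (ZMod p)ˣ with IsSquare u, ζ ^ (u : ZMod p).val -
        ∑ u : (ZMod p)ˣ with ¬ IsSquare u, ζ ^ (u : ZMod p).val := by
  have sum_over_units : aeval ζ (feketePolynomial p) =
      ∑ u : (ZMod p)ˣ, (quadraticChar (ZMod p) u : R) * ζ ^ (u : ZMod p).val := by
    rw [aeval_feketePolynomial]
    refine (sum_of_injOn Units.val Units.val_injective.injOn (by simp) ?_ (by simp)).symm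
    intro x _ hx
    have hx0 : x = 0 := by
      by_contra h
      exact hx ⟨Units.mk0 x h, by simp, rfl⟩
    simp [hx0]
  rw [sum_over_units, sum_filter, sum_filter, ← sum_sub_distrib]
  refine sum_congr rfl fun u _ ↦ ?_
  by_cases hu : IsSquare u
  · have hχ : quadraticChar (ZMod p) u = 1 :=
      (quadraticChar_one_iff_isSquare u.ne_zero).2 (isSquare_units_val_iff.2 hu)
    simp [hu, hχ]
  · have hχ : quadraticChar (ZMod p) u = -1 :=
      quadraticChar_neg_one_iff_not_isSquare.2 (mt isSquare_units_val_iff.1 hu)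
    simp [hu, hχ]

lemma aeval_feketePolynomial_sq {R : Type*} [CommRing R] [IsDomain R] [CharZero R]
    (hm : p = 2 * m + 1) {ζ : R} (hζ : IsPrimitiveRoot ζ p) :
    aeval ζ (feketePolynomial p) ^ 2 = (-1) ^ m * p := by
  have hchar : ringChar (ZMod p) ≠ 2 := by rw [ZMod.ringChar_zmod_n]; lia
  let χ := (quadraticChar (ZMod p)).ringHomComp (Int.castRingHom R)
  have hχ : χ ≠ 1 :=
    (MulChar.ringHomComp_ne_one_iff (RingHom.injective_int _)).2 (quadraticChar_ne_one hchar)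
  have hχ_neg_one : χ (-1) = (-1) ^ m := by
    rw [MulChar.ringHomComp_apply, quadraticChar_neg_one hchar, ZMod.card,
      ZMod.χ₄_eq_neg_one_pow (by lia), show p / 2 = m by lia]
    simp
  have hgauss : aeval ζ (feketePolynomial p) = gaussSum χ (AddChar.zmodChar p hζ.pow_eq_one) :=
    aeval_feketePolynomial ζ
  rw [hgauss, gaussSum_sq hχ ((quadraticChar_isQuadratic _).comp _)
    (AddChar.zmodChar_primitive_of_primitive_root p hζ), hχ_neg_one, ZMod.card]

-- By Euler's criterion the left side is `∑ x, x ^ m * (x (x - 1) ⋯ (x - m + 1))`: the sum over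
-- `ZMod p` of the values of a monic polynomial of degree `p - 1`.
lemma aeval_one_iterate_derivative_feketePolynomial (hm : p = 2 * m + 1) :
    aeval (1 : ZMod p) (derivative^[m] (feketePolynomial p)) = -1 := by
  have hchar : ringChar (ZMod p) ≠ 2 := by rw [ZMod.ringChar_zmod_n]; lia
  let f : (ZMod p)[X] := X ^ m * descPochhammer (ZMod p) m
  have hmonic : f.Monic := (monic_X_pow m).mul (monic_descPochhammer _ m)
  have hdeg : f.natDegree = Fintype.card (ZMod p) - 1 := by
    rw [(monic_X_pow m).natDegree_mul (monic_descPochhammer _ m), natDegree_X_pow,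
      descPochhammer_natDegree, ZMod.card]
    lia
  have euler (x : ZMod p) : (quadraticChar (ZMod p) x : ZMod p) = x ^ m := by
    rw [quadraticChar_eq_pow_of_char_ne_two' hchar, ZMod.card, show p / 2 = m by lia]
  calc aeval (1 : ZMod p) (derivative^[m] (feketePolynomial p))
    _ = ∑ x : ZMod p, (quadraticChar (ZMod p) x : ZMod p) * (x.val.descFactorial m : ZMod p) := by
      simp only [feketePolynomial, iterate_derivative_sum, iterate_derivative_C_mul,
        iterate_derivative_X_pow_eq_natCast_mul, map_sum, map_mul, map_pow, map_natCast, aeval_C,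
        aeval_X, one_pow, mul_one, algebraMap_int_eq, Int.coe_castRingHom]
    _ = ∑ x, f.eval x := by
      refine sum_congr rfl fun x _ ↦ ?_
      rw [euler, ← descPochhammer_eval_eq_descFactorial, ZMod.natCast_zmod_val]
      simp [f]
    _ = -f.coeff (Fintype.card (ZMod p) - 1) :=
      sum_eval_eq_neg_coeff_card_sub_one (hdeg ▸ Nat.sub_one_lt Fintype.card_ne_zero)
    _ = -1 := by rw [← hdeg, hmonic.coeff_natDegree]

end FeketePolynomial

section GaussProduct

/-- Gauss's product, an integral polynomial whose value at a `(2 * m + 1)`-th root of unity `ζ` is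
the product of the `ζ ^ j - ζ ^ (-j)` over the odd `j = 2 * k + 1` below `2 * m + 1`; the power
`ζ ^ (-j)` is encoded as `X ^ (2 * m + 1 - j) = X ^ (2 * (m - k))`. -/
noncomputable def gaussProduct (m : ℕ) : ℤ[X] :=
  ∏ k ∈ range m, (X ^ (2 * k + 1) - X ^ (2 * (m - k)))

lemma aeval_gaussProduct {R : Type*} [CommRing R] (ζ : R) (m : ℕ) :
    aeval ζ (gaussProduct m) = ∏ k ∈ range m, (ζ ^ (2 * k + 1) - ζ ^ (2 * (m - k))) := by
  simp [gaussProduct, map_prod]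

lemma aeval_gaussProduct_sq {R : Type*} [CommRing R] [IsDomain R] {m : ℕ} {ζ : R}
    (hζ : IsPrimitiveRoot ζ (2 * m + 1)) :
    aeval ζ (gaussProduct m) ^ 2 = (-1) ^ m * (2 * m + 1 : ℕ) := by
  let g (i : ℕ) : R := 1 - (ζ ^ 2) ^ (i + 1)
  have hζ2 : IsPrimitiveRoot (ζ ^ 2) (2 * m + 1) := hζ.pow_of_coprime 2 (by simp)
  have factor_sq (k) (hk : k ∈ range m) :
      (ζ ^ (2 * k + 1) - ζ ^ (2 * (m - k))) ^ 2 = -1 * (g (2 * k) * g (2 * (m - 1 - k) + 1)) := by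
    have hinv : ζ ^ (2 * k + 1) * ζ ^ (2 * (m - k)) = 1 := by
      rw [← pow_add, ← hζ.pow_eq_one]
      congr 1
      grind
    have hg₁ : g (2 * k) = 1 - (ζ ^ (2 * k + 1)) ^ 2 := by simp only [g]; ring
    have hg₂ : g (2 * (m - 1 - k) + 1) = 1 - (ζ ^ (2 * (m - k))) ^ 2 := by
      simp only [g, pow_right_comm ζ 2]
      congr 3
      grind
    rw [hg₁, hg₂]
    linear_combination (ζ ^ (2 * k + 1) * ζ ^ (2 * (m - k)) - 1) * hinv
  calc aeval ζ (gaussProduct m) ^ 2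
    _ = ∏ k ∈ range m, -1 * (g (2 * k) * g (2 * (m - 1 - k) + 1)) := by
      rw [aeval_gaussProduct, ← prod_pow, prod_congr rfl factor_sq]
    _ = (-1) ^ m * ∏ i ∈ range (2 * m), g i := by
      rw [prod_mul_distrib, prod_const, card_range, prod_mul_distrib, prod_range_two_mul,
        prod_range_reflect (fun k ↦ g (2 * k + 1))]
    _ = (-1) ^ m * (2 * m + 1 : ℕ) := by
      rw [hζ2.prod_one_sub_pow_eq_order]
      push_cast
      rfl

lemma aeval_one_iterate_derivative_gaussProduct {p m : ℕ} [Fact p.Prime] (hm : p = 2 * m + 1) :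
    aeval (1 : ZMod p) (derivative^[m] (gaussProduct m)) = -1 := by
  have hp : (2 * m + 1 : ZMod p) = 0 := by
    exact_mod_cast (ZMod.natCast_eq_zero_iff (2 * m + 1) p).2 hm.dvd
  have aeval_derivative_factor (k) (hk : k ∈ range m) :
      aeval (1 : ZMod p) (derivative (X ^ (2 * k + 1) - X ^ (2 * (m - k)) : ℤ[X])) =
        (4 * k + 2 : ℕ) := by
    simp only [derivative_X_pow, map_sub, map_mul, map_natCast, map_pow, aeval_X,
      one_pow, mul_one]
    push_cast [Nat.cast_sub (mem_range.1 hk).le]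
    linear_combination -hp
  have h := aeval_iterate_derivative_prod_of_aeval_eq_zero (s := range m) (a := (1 : ZMod p))
    (f := fun k ↦ (X ^ (2 * k + 1) - X ^ (2 * (m - k)) : ℤ[X])) (by simp)
  rw [card_range, prod_congr rfl aeval_derivative_factor] at h
  rw [gaussProduct, h, ← Nat.cast_prod, ← Nat.cast_mul, mul_comm,
    prod_range_four_mul_add_two_mul_factorial, show 2 * m = p - 1 by lia]
  exact ZMod.wilsons_lemma p

end GaussProduct

theorem aeval_feketePolynomial_eq_aeval_gaussProduct {K : Type*} [Field K] [CharZero K]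
    {p m : ℕ} [Fact p.Prime] (hm : p = 2 * m + 1) {ζ : K} (hζ : IsPrimitiveRoot ζ p) :
    aeval ζ (feketePolynomial p) = aeval ζ (gaussProduct m) := by
  have hp : p.Prime := Fact.out
  have hsq : aeval ζ (feketePolynomial p) ^ 2 = aeval ζ (gaussProduct m) ^ 2 := by
    rw [aeval_feketePolynomial_sq hm hζ, aeval_gaussProduct_sq (hm ▸ hζ), hm]
  refine (sq_eq_sq_iff_eq_or_eq_neg.1 hsq).resolve_right fun hneg ↦ ?_
  have hzero : aeval ζ (feketePolynomial p + gaussProduct m) = 0 := by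
    rw [map_add, hneg, neg_add_cancel]
  have hderiv := aeval_one_iterate_derivative_eq_zero_of_isPrimitiveRoot hζ hzero
    (k := m) (by have := hp.two_le; lia)
  rw [iterate_map_add, map_add, aeval_one_iterate_derivative_feketePolynomial hm,
    aeval_one_iterate_derivative_gaussProduct hm] at hderiv
  have htwo : ((2 : ℕ) : ZMod p) = 0 := by
    push_cast
    linear_combination -hderiv
  have := Nat.le_of_dvd two_pos ((ZMod.natCast_eq_zero_iff 2 p).1 htwo)
  have := hp.two_le
  lia

section Sine

open Real

lemma aeval_exp_gaussProduct (m : ℕ) :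
    aeval (Complex.exp (2 * π * Complex.I / (2 * m + 1 : ℕ))) (gaussProduct m) =
      Complex.I ^ m *
        ((∏ k ∈ range m, 2 * sin (2 * π * (2 * k + 1) / (2 * m + 1)) : ℝ) : ℂ) := by
  have hn : (2 * m + 1 : ℂ) ≠ 0 := by exact_mod_cast (2 * m).succ_ne_zero
  rw [aeval_gaussProduct, Complex.ofReal_prod, ← card_range m, ← prod_const, card_range,
    ← prod_mul_distrib]
  refine prod_congr rfl fun k hk ↦ ?_
  set θ : ℂ := 2 * π * (2 * k + 1) / (2 * m + 1) with hθ
  have pow_eq : Complex.exp (2 * π * Complex.I / (2 * m + 1 : ℕ)) ^ (2 * k + 1) =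
      Complex.exp (θ * Complex.I) := by
    rw [← Complex.exp_nat_mul]
    congr 1
    push_cast
    rw [hθ]
    ring
  have pow_neg_eq : Complex.exp (2 * π * Complex.I / (2 * m + 1 : ℕ)) ^ (2 * (m - k)) =
      Complex.exp (-θ * Complex.I) := by
    rw [← Complex.exp_nat_mul, ← Complex.exp_periodic (-θ * Complex.I)]
    congr 1
    push_cast [Nat.cast_sub (mem_range.1 hk).le]
    rw [hθ]
    field_simp
    ring
  rw [pow_eq, pow_neg_eq]
  push_cast
  rw [← hθ, Complex.two_sin]
  linear_combination (Complex.exp (θ * Complex.I) - Complex.exp (-θ * Complex.I)) * Complex.I_sq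

-- The angle `2π (2 * k + 1) / (2 * m + 1)` exceeds `π` exactly for the last `m / 2` indices.
lemma neg_one_pow_mul_prod_two_mul_sin_pos (m : ℕ) :
    0 < (-1) ^ (m / 2) * ∏ k ∈ range m, 2 * sin (2 * π * (2 * k + 1) / (2 * m + 1)) := by
  have hn : (0 : ℝ) < 2 * m + 1 := by positivity
  have hcard : #(Ico (m - m / 2) m) = m / 2 := by rw [Nat.card_Ico]; lia
  have absorb_signs (f : ℕ → ℝ) :
      (-1) ^ (m / 2) * ∏ k ∈ Ico (m - m / 2) m, f k = ∏ k ∈ Ico (m - m / 2) m, -f k := by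
    rw [prod_neg, hcard]
  rw [← prod_range_mul_prod_Ico _ (Nat.sub_le m (m / 2)), mul_left_comm, absorb_signs]
  refine mul_pos (prod_pos fun k hk ↦ ?_) (prod_pos fun k hk ↦ ?_)
  · have hk : (2 * (2 * k + 1) : ℝ) < 2 * m + 1 := by
      exact_mod_cast (by grind : 2 * (2 * k + 1) < 2 * m + 1)
    refine mul_pos two_pos (sin_pos_of_pos_of_lt_pi (by positivity) ?_)
    rw [div_lt_iff₀ hn]
    nlinarith [pi_pos]
  · have hk₁ : (2 * m + 1 : ℝ) < 2 * (2 * k + 1) := by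
      exact_mod_cast (by grind : 2 * m + 1 < 2 * (2 * k + 1))
    have hk₂ : (k : ℝ) < m := by exact_mod_cast (mem_Ico.1 hk).2
    rw [← mul_neg, ← sin_sub_pi]
    refine mul_pos two_pos (sin_pos_of_pos_of_lt_pi ?_ ?_)
    · rw [sub_pos, lt_div_iff₀ hn]
      nlinarith [pi_pos]
    · rw [sub_lt_iff_lt_add, div_lt_iff₀ hn]
      nlinarith [pi_pos]

theorem prod_two_mul_sin_odd_mul_two_pi_div (m : ℕ) :
    ∏ k ∈ range m, 2 * sin (2 * π * (2 * k + 1) / (2 * m + 1)) = (-1) ^ (m / 2) * √(2 * m + 1) := by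
  set S := ∏ k ∈ range m, 2 * sin (2 * π * (2 * k + 1) / (2 * m + 1)) with hS
  have hsq : S ^ 2 = 2 * m + 1 := by
    have h := aeval_gaussProduct_sq (Complex.isPrimitiveRoot_exp (2 * m + 1) (by lia))
    rw [aeval_exp_gaussProduct, ← hS, mul_pow, pow_right_comm, Complex.I_sq] at h
    exact_mod_cast mul_left_cancel₀ (pow_ne_zero m (by simp)) h
  have hsign : ((-1 : ℝ) ^ (m / 2)) * (-1) ^ (m / 2) = 1 := by rw [← mul_pow]; simp
  have hsqrt : √(2 * m + 1) = (-1) ^ (m / 2) * S := by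
    rw [sqrt_eq_iff_mul_self_eq_of_pos (neg_one_pow_mul_prod_two_mul_sin_pos m),
      mul_mul_mul_comm, hsign, one_mul, ← sq, hsq]
  rw [hsqrt, ← mul_assoc, hsign, one_mul]

theorem aeval_exp_feketePolynomial {p m : ℕ} [Fact p.Prime] (hm : p = 2 * m + 1) :
    aeval (Complex.exp (2 * π * Complex.I / p)) (feketePolynomial p) =
      Complex.I ^ m * (-1) ^ (m / 2) * √p := by
  have hζ := Complex.isPrimitiveRoot_exp p (Fact.out : p.Prime).ne_zero
  rw [aeval_feketePolynomial_eq_aeval_gaussProduct hm hζ, hm, aeval_exp_gaussProduct,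
    prod_two_mul_sin_odd_mul_two_pi_div]
  push_cast
  ring

end Sine

end QuadraticGaussSum

open Finset in
/-- The quadratic Gauss sum: for an odd prime `p` and `ω = e^{2πi/p}`, the sum
over quadratic residues minus the sum over non-residues equals `√p` when
`p ≡ 1 (mod 4)` and `i√p` when `p ≡ 3 (mod 4)`. -/
theorem stmt_18 (p : ℕ) (hp : p.Prime) [Fact p.Prime] (hodd : p ≠ 2)
    (ω : ℂ) (hω : ω = Complex.exp (2 * Real.pi * Complex.I / p)) :
    (p % 4 = 1 →
      (∑ x ∈ univ.filter (fun x : (ZMod p)ˣ => IsSquare x), ω ^ ((x : ZMod p).val)) -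
        (∑ x ∈ univ.filter (fun x : (ZMod p)ˣ => ¬ IsSquare x), ω ^ ((x : ZMod p).val))
        = Real.sqrt p) ∧
    (p % 4 = 3 →
      (∑ x ∈ univ.filter (fun x : (ZMod p)ˣ => IsSquare x), ω ^ ((x : ZMod p).val)) -
        (∑ x ∈ univ.filter (fun x : (ZMod p)ˣ => ¬ IsSquare x), ω ^ ((x : ZMod p).val))
        = Complex.I * Real.sqrt p) := by
  rw [← aeval_feketePolynomial_eq_sum_isSquare_sub_sum_not_isSquare, hω]
  have hsign (n : ℕ) : (-1 : ℂ) ^ n * (-1) ^ n = 1 := by rw [← mul_pow]; simp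
  constructor
  · intro h
    rw [aeval_exp_feketePolynomial (m := 2 * (p / 4)) (by lia), pow_mul, Complex.I_sq,
      Nat.mul_div_cancel_left _ two_pos, hsign, one_mul]
  · intro h
    rw [aeval_exp_feketePolynomial (m := 2 * (p / 4) + 1) (by lia), pow_succ, pow_mul,
      Complex.I_sq, show (2 * (p / 4) + 1) / 2 = p / 4 by lia]
    linear_combination Complex.I * √p * hsign (p / 4)
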